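/- Let 𝒱 be a v-transform with fulcrum δ, differentiable at every point of [0,1] except δ, with conditional down probability Δ(v) = −1/𝒱′(𝒱⁻¹(v)), and set δ(u) = Δ(𝒱(u)) and p_{δ,u}(x) = x if u ≤ δ, 1−x if u > δ. Then for every u ∈ [0,1] \ {δ}: if u ≤ δ then p_{δ,u}(δ(u)) = δ(u) = −1/𝒱′(u), and if u > δ then p_{δ,u}(δ(u)) = 1 − δ(u) = 1/𝒱′(u); that is, p_{δ,u}(δ(u)) = (−1)^{1{u ≤ δ}}/𝒱′(u). -/

import Mathlib

open Set MeasureTheory ProbabilityTheory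

/-- A v-transform with fulcrum `δ`: a mapping of `[0,1]` to `[0,1]` with
`𝒱 0 = 𝒱 1 = 1`, `𝒱 δ = 0`, continuous, strictly decreasing on `[0,δ]`,
strictly increasing on `[δ,1]`, and satisfying the square property. -/
structure IsVTransform (V : ℝ → ℝ) (δ : ℝ) : Prop where
  mapsTo : ∀ u ∈ Set.Icc (0:ℝ) 1, V u ∈ Set.Icc (0:ℝ) 1
  fulcrum_mem : δ ∈ Set.Ioo (0:ℝ) 1
  map_zero : V 0 = 1
  map_one : V 1 = 1
  map_fulcrum : V δ = 0
  contOn : ContinuousOn V (Set.Icc 0 1)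
  strictAntiOn : StrictAntiOn V (Set.Icc 0 δ)
  strictMonoOn : StrictMonoOn V (Set.Icc δ 1)
  square : ∀ u ∈ Set.Icc (0:ℝ) 1, u ≠ δ →
    ∃ us ∈ Set.Icc (0:ℝ) 1, ((u < δ ∧ δ < us) ∨ (us < δ ∧ δ < u)) ∧
      V us = V u ∧ |us - u| = V u

/-- The partial inverse `𝒱⁻¹(v) = inf {u ∈ [0,1] : 𝒱(u) = v}` of a v-transform,
taking values in `[0,δ]` (the decreasing branch). -/
noncomputable def partialInverse (V : ℝ → ℝ) (v : ℝ) : ℝ :=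
  sInf {u | u ∈ Set.Icc (0:ℝ) 1 ∧ V u = v}

/-- The conditional down probability `Δ(v) = -1 / 𝒱′(𝒱⁻¹(v))`, where the derivative
is taken within `[0,δ]` (so that at the fulcrum it is the left derivative, following
the convention of the paper). -/
noncomputable def downProb (V : ℝ → ℝ) (δ : ℝ) (v : ℝ) : ℝ :=
  -1 / derivWithin V (Set.Icc 0 δ) (partialInverse V v)

/-- The stochastic inversion function `𝒱⁻¹(v,w)` of a v-transform. -/
noncomputable def stochInv (V : ℝ → ℝ) (δ : ℝ) (v w : ℝ) : ℝ :=
  if w ≤ downProb V δ v then partialInverse V v else v + partialInverse V v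

/-- The function `p_{δ,u}(x)`: equal to `x` if `u ≤ δ` and to `1 - x` if `u > δ`. -/
noncomputable def pfun (δ u x : ℝ) : ℝ := if u ≤ δ then x else 1 - x

/-!
A point `x` of the decreasing branch `[0, δ]` has dual point `D x = x + 𝒱 x`, so `𝒱 ∘ D = 𝒱` on
`[0, δ]`. Differentiating this identity gives `𝒱′(D x) (1 + 𝒱′(x)) = 𝒱′(x)`. As `D` reverses the
order, `1 + 𝒱′(x) ≤ 0`, so `𝒱′(x) ≠ 0` and one may divide to get
`1 / 𝒱′(D x) = 1 + 1 / 𝒱′(x) = 1 - Δ(𝒱 x)`.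
-/

/-- The dual point `x + 𝒱(x)` of a point `x` to the left of the fulcrum. The square property gives
the dual point only as an existential; here it is the explicit function of `x` which that property
forces, so that it can be differentiated. -/
def rightDual (V : ℝ → ℝ) (x : ℝ) : ℝ := x + V x

theorem hasDerivWithinAt_rightDual {V : ℝ → ℝ} {s : Set ℝ} {x a : ℝ}
    (ha : HasDerivWithinAt V a s x) : HasDerivWithinAt (rightDual V) (1 + a) s x :=
  (hasDerivWithinAt_id x s).add ha

namespace IsVTransform

variable {V : ℝ → ℝ} {δ u v x a b : ℝ}

theorem apply_pos (hV : IsVTransform V δ) (hu : u ∈ Icc 0 1) (hne : u ≠ δ) : 0 < V u := by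
  rw [← hV.map_fulcrum]
  rcases hne.lt_or_gt with hlt | hgt
  · exact hV.strictAntiOn ⟨hu.1, hlt.le⟩ (right_mem_Icc.2 hV.fulcrum_mem.1.le) hlt
  · exact hV.strictMonoOn (left_mem_Icc.2 hV.fulcrum_mem.2.le) ⟨hgt.le, hu.2⟩ hgt

theorem partialInverse_apply (hV : IsVTransform V δ) (hx : x ∈ Icc 0 δ) :
    partialInverse V (V x) = x := by
  refine IsLeast.csInf_eq ⟨⟨⟨hx.1, hx.2.trans hV.fulcrum_mem.2.le⟩, rfl⟩, ?_⟩
  rintro y ⟨hy, hVy⟩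
  by_contra! hyx
  exact (hV.strictAntiOn ⟨hy.1, hyx.le.trans hx.2⟩ hx hyx).ne' hVy

theorem surjOn_left (hV : IsVTransform V δ) : SurjOn V (Icc 0 δ) (Icc 0 1) := by
  have hcont : ContinuousOn V (Icc 0 δ) :=
    hV.contOn.mono (Icc_subset_Icc_right hV.fulcrum_mem.2.le)
  simpa only [SurjOn, hV.map_fulcrum, hV.map_zero] using
    intermediate_value_Icc' hV.fulcrum_mem.1.le hcont

theorem partialInverse_mem_Icc (hV : IsVTransform V δ) (hv : v ∈ Icc 0 1) :
    partialInverse V v ∈ Icc 0 δ := by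
  obtain ⟨x, hx, rfl⟩ := hV.surjOn_left hv
  rwa [hV.partialInverse_apply hx]

theorem apply_partialInverse (hV : IsVTransform V δ) (hv : v ∈ Icc 0 1) :
    V (partialInverse V v) = v := by
  obtain ⟨x, hx, rfl⟩ := hV.surjOn_left hv
  rw [hV.partialInverse_apply hx]

theorem partialInverse_mem_Ico (hV : IsVTransform V δ) (hv : v ∈ Ioc 0 1) :
    partialInverse V v ∈ Ico 0 δ := by
  have hv' : v ∈ Icc 0 1 := Ioc_subset_Icc_self hv
  obtain ⟨h0, hle⟩ := hV.partialInverse_mem_Icc hv'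
  refine ⟨h0, hle.lt_of_ne fun heq => hv.1.ne ?_⟩
  rw [← hV.map_fulcrum, ← heq, hV.apply_partialInverse hv']

theorem rightDual_mem_Icc_and_apply_rightDual (hV : IsVTransform V δ) (hx : x ∈ Icc 0 δ) :
    rightDual V x ∈ Icc δ 1 ∧ V (rightDual V x) = V x := by
  rcases hx.2.eq_or_lt with rfl | hlt
  · simp [rightDual, hV.map_fulcrum, hV.fulcrum_mem.2.le]
  obtain ⟨y, hy, hside, hVy, habs⟩ := hV.square x ⟨hx.1, hx.2.trans hV.fulcrum_mem.2.le⟩ hlt.ne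
  have hδy : δ < y := hside.elim And.right fun h => absurd h.2 hlt.not_gt
  have hdual : rightDual V x = y := by
    rw [rightDual, ← habs, abs_of_pos (sub_pos.2 (hlt.trans hδy)), add_sub_cancel]
  rw [hdual]
  exact ⟨⟨hδy.le, hy.2⟩, hVy⟩

theorem mapsTo_rightDual (hV : IsVTransform V δ) :
    MapsTo (rightDual V) (Icc 0 δ) (Icc δ 1) :=
  fun _ hx => (hV.rightDual_mem_Icc_and_apply_rightDual hx).1

theorem apply_rightDual (hV : IsVTransform V δ) (hx : x ∈ Icc 0 δ) : V (rightDual V x) = V x :=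
  (hV.rightDual_mem_Icc_and_apply_rightDual hx).2

theorem rightDual_partialInverse (hV : IsVTransform V δ) (hu : u ∈ Icc δ 1) :
    rightDual V (partialInverse V (V u)) = u := by
  have hVu : V u ∈ Icc 0 1 := hV.mapsTo u ⟨hV.fulcrum_mem.1.le.trans hu.1, hu.2⟩
  have hx := hV.partialInverse_mem_Icc hVu
  apply hV.strictMonoOn.injOn (hV.mapsTo_rightDual hx) hu
  rw [hV.apply_rightDual hx, hV.apply_partialInverse hVu]

theorem antitoneOn_rightDual (hV : IsVTransform V δ) :
    AntitoneOn (rightDual V) (Icc 0 δ) := by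
  intro x hx y hy hxy
  rw [← hV.strictMonoOn.le_iff_le (hV.mapsTo_rightDual hy) (hV.mapsTo_rightDual hx),
    hV.apply_rightDual hx, hV.apply_rightDual hy]
  exact hV.strictAntiOn.antitoneOn hx hy hxy

theorem le_neg_one_of_hasDerivWithinAt (hV : IsVTransform V δ) (hx : x ∈ Icc 0 δ)
    (ha : HasDerivWithinAt V a (Icc 0 δ) x) : a ≤ -1 := by
  have hderiv : derivWithin (rightDual V) (Icc 0 δ) x = 1 + a :=
    (hasDerivWithinAt_rightDual ha).derivWithin (uniqueDiffOn_Icc hV.fulcrum_mem.1 x hx)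
  linarith [hV.antitoneOn_rightDual.derivWithin_nonpos (x := x)]

theorem mul_one_add_eq_of_hasDerivWithinAt (hV : IsVTransform V δ) (hx : x ∈ Icc 0 δ)
    (ha : HasDerivWithinAt V a (Icc 0 δ) x)
    (hb : HasDerivWithinAt V b (Icc δ 1) (rightDual V x)) : b * (1 + a) = a := by
  have hcomp : HasDerivWithinAt (V ∘ rightDual V) (b * (1 + a)) (Icc 0 δ) x :=
    hb.comp x (hasDerivWithinAt_rightDual ha) hV.mapsTo_rightDual
  have hV' : HasDerivWithinAt V (b * (1 + a)) (Icc 0 δ) x :=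
    hcomp.congr_of_mem (fun y hy => (hV.apply_rightDual hy).symm) hx
  exact (uniqueDiffOn_Icc hV.fulcrum_mem.1 x hx).eq_deriv _ hV' ha

theorem one_add_one_div_eq_of_hasDerivWithinAt (hV : IsVTransform V δ) (hx : x ∈ Icc 0 δ)
    (ha : HasDerivWithinAt V a (Icc 0 δ) x)
    (hb : HasDerivWithinAt V b (Icc δ 1) (rightDual V x)) : 1 + 1 / a = 1 / b := by
  have hab : b * (1 + a) = a := hV.mul_one_add_eq_of_hasDerivWithinAt hx ha hb
  have ha0 : a ≠ 0 := by linarith [hV.le_neg_one_of_hasDerivWithinAt hx ha]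
  have hb0 : b ≠ 0 := left_ne_zero_of_mul (hab ▸ ha0)
  field_simp
  linear_combination hab

theorem downProb_apply_of_lt_fulcrum (hV : IsVTransform V δ) (hu : u ∈ Ico 0 δ) :
    downProb V δ (V u) = -1 / derivWithin V (Icc 0 1) u := by
  have hsets : Icc 0 δ =ᶠ[nhds u] Icc 0 1 := by
    filter_upwards [Iio_mem_nhds hu.2] with y hy
    exact propext (and_congr_right fun _ => iff_of_true hy.le (hy.le.trans hV.fulcrum_mem.2.le))
  rw [downProb, hV.partialInverse_apply (Ico_subset_Icc_self hu), derivWithin_congr_set hsets]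

theorem one_sub_downProb_apply_of_fulcrum_lt (hV : IsVTransform V δ) (hu : u ∈ Ioc δ 1)
    (hdiff : DifferentiableWithinAt ℝ V (Icc 0 1) u)
    (hdual : DifferentiableWithinAt ℝ V (Icc 0 1) (partialInverse V (V u))) :
    1 - downProb V δ (V u) = 1 / derivWithin V (Icc 0 1) u := by
  obtain ⟨h0, h1⟩ := hV.fulcrum_mem
  have hx : partialInverse V (V u) ∈ Icc 0 δ :=
    hV.partialInverse_mem_Icc (hV.mapsTo u ⟨h0.le.trans hu.1.le, hu.2⟩)
  have ha := (hdual.mono (Icc_subset_Icc_right h1.le)).hasDerivWithinAt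
  have hb := hdiff.hasDerivWithinAt.mono (Icc_subset_Icc_left h0.le)
  rw [← hV.one_add_one_div_eq_of_hasDerivWithinAt hx ha
    (by rwa [hV.rightDual_partialInverse (Ioc_subset_Icc_self hu)]), downProb]
  ring

end IsVTransform

theorem pfun_downProb_eq_inv_deriv_general {V : ℝ → ℝ} {δ u : ℝ} (hV : IsVTransform V δ)
    (hu : u ∈ Icc 0 1) (hne : u ≠ δ) (hdiff : DifferentiableWithinAt ℝ V (Icc 0 1) u)
    (hdual : DifferentiableWithinAt ℝ V (Icc 0 1) (partialInverse V (V u))) :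
    (u ≤ δ →
      pfun δ u (downProb V δ (V u)) = downProb V δ (V u) ∧
      downProb V δ (V u) = -1 / derivWithin V (Icc 0 1) u) ∧
    (δ < u →
      pfun δ u (downProb V δ (V u)) = 1 - downProb V δ (V u) ∧
      1 - downProb V δ (V u) = 1 / derivWithin V (Icc 0 1) u) :=
  ⟨fun hle => ⟨if_pos hle, hV.downProb_apply_of_lt_fulcrum ⟨hu.1, hle.lt_of_ne hne⟩⟩,
    fun hlt => ⟨if_neg hlt.not_ge,
      hV.one_sub_downProb_apply_of_fulcrum_lt ⟨hlt, hu.2⟩ hdiff hdual⟩⟩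

/-- equation (A.1) of the paper: writing `δ(u) = Δ(𝒱(u))`, for
`u ∈ [0,1] \ {δ}` one has `p_{δ,u}(δ(u)) = -1/𝒱′(u)` if `u ≤ δ` and
`p_{δ,u}(δ(u)) = 1/𝒱′(u)` if `u > δ`. -/
theorem pfun_downProb_eq_inv_deriv (V : ℝ → ℝ) (δ : ℝ) (hV : IsVTransform V δ)
    (hdiff : ∀ u ∈ Set.Icc (0:ℝ) 1, u ≠ δ →
      DifferentiableWithinAt ℝ V (Set.Icc 0 1) u) :
    ∀ u ∈ Set.Icc (0:ℝ) 1, u ≠ δ →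
      (u ≤ δ →
        pfun δ u (downProb V δ (V u)) = downProb V δ (V u) ∧
        downProb V δ (V u) = -1 / derivWithin V (Set.Icc 0 1) u) ∧
      (δ < u →
        pfun δ u (downProb V δ (V u)) = 1 - downProb V δ (V u) ∧
        1 - downProb V δ (V u) = 1 / derivWithin V (Set.Icc 0 1) u) := by
  intro u hu hne
  have hx := hV.partialInverse_mem_Ico ⟨hV.apply_pos hu hne, (hV.mapsTo u hu).2⟩
  exact pfun_downProb_eq_inv_deriv_general hV hu hne (hdiff u hu hne)
    (hdiff _ ⟨hx.1, hx.2.le.trans hV.fulcrum_mem.2.le⟩ hx.2.ne)
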